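/- arXiv:1412.2982 — 2 statements merged into one kernel-verified Lean document; each statement's English description precedes it below -/
import Mathlib

section
/- Fix reals ρ > 0 and θ > 0 and natural numbers m ≥ 1 and 0 ≤ n₀ ≤ m. Suppose P̂_0, …, P̂_m are real numbers satisfying: P̂_1 − (ρ+θ) P̂_0 = −δ(0,n₀); (n+1) P̂_{n+1} + ρ P̂_{n−1} − (ρ+θ+n) P̂_n = −δ(n,n₀) for 1 ≤ n ≤ m−1; and ρ P̂_{m−1} − (θ+m) P̂_m = −δ(m,n₀), where δ(n,n₀) = 1 if n = n₀ and 0 otherwise. Then P̂_m = (n₀!/m!) ρ^{m−n₀} F_{n₀}(θ) / [(m+1) F_{m+1}(θ) − ρ F_m(θ)]. -/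
open Finset

/-- F_n(θ) = Σ_{ℓ=0}^{n} [ρ^{n−ℓ}/((n−ℓ)! ℓ!)] (θ)_ℓ, with (θ)_ℓ the rising factorial. -/
noncomputable def erlF (ρ θ : ℝ) (n : ℕ) : ℝ :=
  ∑ ℓ ∈ Finset.range (n + 1),
    ρ ^ (n - ℓ) / ((n - ℓ).factorial * ℓ.factorial) * (ascPochhammer ℝ ℓ).eval θ

/-!
The numbers `f n = n! * F_n(θ)` satisfy
`f (n + 2) = (ρ + θ + n + 1) * f (n + 1) - ρ * (n + 1) * f n`, which after scaling `f n` by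
`ρ ^ (-n)` is the adjoint of the Kolmogorov recurrence. Hence passing from `n - 1` to `n` multiplies
the Casoratian `(n + 1) * f n * P (n + 1) - f (n + 1) * P n` by `ρ` and subtracts `f n` times the
source in state `n`. The equation for the top state `m` closes this recursion at
`P m * (f (m + 1) - ρ * f m)`, and the bracket equals `θ * m! * F_m(θ + 1)`, which is positive.
-/

lemma sum_range_succ_pow_sub_mul {R : Type*} [Semiring R] (r : R) (a : ℕ → R) (n : ℕ) :
    ∑ j ∈ range (n + 2), r ^ (n + 1 - j) * a j =
      r * ∑ j ∈ range (n + 1), r ^ (n - j) * a j + a (n + 1) := by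
  rw [sum_range_succ, mul_sum, Nat.sub_self, pow_zero, one_mul]
  congr 1
  refine sum_congr rfl fun j hj ↦ ?_
  rw [Nat.succ_sub (mem_range_succ_iff.mp hj), pow_succ', mul_assoc]

/-- The Charlier polynomial `ρ ^ n * C_n(-θ; ρ)`, normalised to be monic in `θ`. It equals
`n! * F_n(θ)`; clearing the factorials makes it available over any commutative semiring. -/
noncomputable def charlier {R : Type*} [CommSemiring R] (ρ θ : R) (n : ℕ) : R :=
  ∑ p ∈ antidiagonal n, (n.choose p.1 : R) * ((ascPochhammer R p.1).eval θ * ρ ^ p.2)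

section CommSemiring

variable {R : Type*} [CommSemiring R]

@[simp]
lemma charlier_zero (ρ θ : R) : charlier ρ θ 0 = 1 := by
  simp [charlier]

lemma charlier_succ (ρ θ : R) (n : ℕ) :
    charlier ρ θ (n + 1) = ρ * charlier ρ θ n + θ * charlier ρ (θ + 1) n := by
  simp only [charlier, mul_sum]
  rw [sum_antidiagonal_choose_succ_mul fun i j ↦ (ascPochhammer R i).eval θ * ρ ^ j]
  congr 1 <;> refine sum_congr rfl fun p hp ↦ ?_
  · ring
  · rw [Nat.choose_symm_of_eq_add (mem_antidiagonal.mp hp).symm, ascPochhammer_succ_left]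
    simp only [Polynomial.eval_mul, Polynomial.eval_X, Polynomial.eval_comp, Polynomial.eval_add,
      Polynomial.eval_one]
    ring

lemma charlier_add_one_succ (ρ θ : R) (n : ℕ) :
    charlier ρ (θ + 1) (n + 1) = charlier ρ θ (n + 1) + (n + 1) * charlier ρ (θ + 1) n := by
  induction n generalizing θ with
  | zero => simp [charlier_succ, add_assoc]
  | succ n ih =>
    calc charlier ρ (θ + 1) (n + 2)
        = ρ * (charlier ρ θ (n + 1) + (n + 1) * charlier ρ (θ + 1) n) +
            (θ + 1) * (charlier ρ (θ + 1) (n + 1) + (n + 1) * charlier ρ (θ + 1 + 1) n) := by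
          rw [← ih θ, ← ih (θ + 1), ← charlier_succ]
      _ = (ρ * charlier ρ θ (n + 1) + θ * charlier ρ (θ + 1) (n + 1)) +
            charlier ρ (θ + 1) (n + 1) +
            (n + 1) * (ρ * charlier ρ (θ + 1) n + (θ + 1) * charlier ρ (θ + 1 + 1) n) := by
          ring
      _ = charlier ρ θ (n + 2) + ((n + 1 : ℕ) + 1) * charlier ρ (θ + 1) (n + 1) := by
          rw [← charlier_succ, ← charlier_succ]
          push_cast
          ring

lemma charlier_pos [PartialOrder R] [IsStrictOrderedRing R] {ρ θ : R} (hρ : 0 ≤ ρ) (hθ : 0 < θ)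
    (n : ℕ) : 0 < charlier ρ θ n := by
  have hasc (k : ℕ) : 0 < (ascPochhammer R k).eval θ := ascPochhammer_pos k θ hθ
  refine sum_pos' (fun p _ ↦ ?_) ⟨(n, 0), by simp, by simpa using hasc n⟩
  have := hasc p.1
  positivity

end CommSemiring

section CommRing

variable {R : Type*} [CommRing R]

lemma charlier_succ_succ (ρ θ : R) (n : ℕ) :
    charlier ρ θ (n + 2) =
      (ρ + θ + (n + 1)) * charlier ρ θ (n + 1) - ρ * (n + 1) * charlier ρ θ n := by
  linear_combination
    charlier_succ ρ θ (n + 1) + θ * charlier_add_one_succ ρ θ n - (n + 1) * charlier_succ ρ θ n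

lemma charlier_casoratian_eq_neg_sum (ρ θ : R) {P b : ℕ → R} {N : ℕ}
    (h0 : P 1 - (ρ + θ) * P 0 = -b 0)
    (hstep : ∀ n < N,
      ((n : R) + 2) * P (n + 2) + ρ * P n - (ρ + θ + (n + 1)) * P (n + 1) = -b (n + 1)) :
    (N + 1) * charlier ρ θ N * P (N + 1) - charlier ρ θ (N + 1) * P N =
      -∑ j ∈ range (N + 1), ρ ^ (N - j) * (charlier ρ θ j * b j) := by
  induction N with
  | zero => simpa [charlier_succ] using h0
  | succ N ih =>
    have hprev := ih fun n hn ↦ hstep n (hn.trans N.lt_succ_self)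
    rw [sum_range_succ_pow_sub_mul, charlier_succ_succ]
    push_cast
    linear_combination ρ * hprev + charlier ρ θ (N + 1) * hstep N N.lt_succ_self

-- The source `b` is the initial distribution; a point mass gives a deterministic initial state.
theorem erlang_loss_blocking_transform_general (ρ θ : R) {m : ℕ} (hm : 1 ≤ m) {P b : ℕ → R}
    (h0 : P 1 - (ρ + θ) * P 0 = -b 0)
    (hmid : ∀ n : ℕ, 1 ≤ n → n ≤ m - 1 →
      ((n : R) + 1) * P (n + 1) + ρ * P (n - 1) - (ρ + θ + n) * P n = -b n)
    (htop : ρ * P (m - 1) - (θ + m) * P m = -b m) :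
    P m * (θ * charlier ρ (θ + 1) m) =
      ∑ j ∈ range (m + 1), ρ ^ (m - j) * (charlier ρ θ j * b j) := by
  obtain ⟨N, rfl⟩ := Nat.exists_eq_add_of_le' hm
  have hcas := charlier_casoratian_eq_neg_sum ρ θ (N := N) h0 fun n hn ↦ by
    have hn' := hmid (n + 1) n.succ_pos hn
    rw [Nat.add_sub_cancel] at hn'
    push_cast at hn'
    linear_combination hn'
  rw [Nat.add_sub_cancel] at htop
  push_cast at htop
  rw [sum_range_succ_pow_sub_mul]
  linear_combination P (N + 1) * (charlier_succ_succ ρ θ N - charlier_succ ρ θ (N + 1)) -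
    charlier ρ θ (N + 1) * htop - ρ * hcas

end CommRing

lemma erlF_eq_charlier_div_factorial (ρ θ : ℝ) (n : ℕ) :
    erlF ρ θ n = charlier ρ θ n / n.factorial := by
  rw [erlF, charlier, Nat.sum_antidiagonal_eq_sum_range_succ_mk, sum_div]
  refine sum_congr rfl fun l hl ↦ ?_
  rw [Nat.cast_choose ℝ (mem_range_succ_iff.mp hl)]
  field_simp

lemma succ_mul_erlF_succ_sub (ρ θ : ℝ) (n : ℕ) :
    ((n : ℝ) + 1) * erlF ρ θ (n + 1) - ρ * erlF ρ θ n = θ * erlF ρ (θ + 1) n := by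
  simp only [erlF_eq_charlier_div_factorial, charlier_succ, Nat.factorial_succ]
  push_cast
  field_simp
  ring

/-- if P̂_0, …, P̂_m solve the Laplace-transformed forward Kolmogorov
system of the M/M/m/m loss model started in state n₀ ≤ m, then the transform of the
blocking probability is
P̂_m = (n₀!/m!) ρ^{m−n₀} F_{n₀}(θ) / [(m+1) F_{m+1}(θ) − ρ F_m(θ)]. -/
theorem erlang_loss_blocking_transform (ρ θ : ℝ) (hρ : 0 < ρ) (hθ : 0 < θ)
    (m n₀ : ℕ) (hm : 1 ≤ m) (hn₀ : n₀ ≤ m) (P : ℕ → ℝ)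
    (h0 : P 1 - (ρ + θ) * P 0 = -(if 0 = n₀ then (1 : ℝ) else 0))
    (hmid : ∀ n : ℕ, 1 ≤ n → n ≤ m - 1 →
      ((n : ℝ) + 1) * P (n + 1) + ρ * P (n - 1) - (ρ + θ + n) * P n
        = -(if n = n₀ then (1 : ℝ) else 0))
    (htop : ρ * P (m - 1) - (θ + m) * P m = -(if m = n₀ then (1 : ℝ) else 0)) :
    P m = (n₀.factorial : ℝ) / m.factorial * ρ ^ (m - n₀) * erlF ρ θ n₀
      / (((m : ℝ) + 1) * erlF ρ θ (m + 1) - ρ * erlF ρ θ m) := by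
  have hP : P m * (θ * charlier ρ (θ + 1) m) = ρ ^ (m - n₀) * charlier ρ θ n₀ := by
    simpa [Nat.lt_succ_iff, hn₀] using
      erlang_loss_blocking_transform_general ρ θ hm (b := (if · = n₀ then 1 else 0)) h0 hmid htop
  have hpos : 0 < charlier ρ (θ + 1) m := charlier_pos hρ.le (by positivity) m
  rw [succ_mul_erlF_succ_sub, erlF_eq_charlier_div_factorial, erlF_eq_charlier_div_factorial]
  field_simp
  linear_combination hP
end

section
/- Fix reals ρ > 0 and θ > 0 and natural numbers m ≥ 1 and n₀ ≥ m. Let Δ = (m+ρ+θ)² − 4mρ (which is strictly positive), A = [m+ρ+θ − √Δ]/(2m), B = [m+ρ+θ + √Δ]/(2m), and assume (m+1)F_{m+1}(θ) − A m F_m(θ) ≠ 0. Define, with R = [(m+1)F_{m+1}(θ) − B m F_m(θ)]/[A m F_m(θ) − (m+1)F_{m+1}(θ)]: P̂_n = B^{m−n₀} F_n(θ)/[(m+1)F_{m+1}(θ) − A m F_m(θ)] for 0 ≤ n ≤ m; P̂_n = [B^{n−n₀} + A^{n−m} B^{m−n₀} R]/√Δ for m ≤ n ≤ n₀; and P̂_n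 = [A^{n−n₀} + B^{m−n₀} A^{n−m} R]/√Δ for n ≥ n₀. Then the three formulas agree at n = m and at n = n₀, and the family (P̂_n)_{n≥0} satisfies: P̂_1 = (ρ+θ) P̂_0; (n+1) P̂_{n+1} + ρ P̂_{n−1} − (ρ+θ+n) P̂_n = 0 for 1 ≤ n ≤ m−1; and m P̂_{n+1} + ρ P̂_{n−1} − (ρ+θ+m) P̂_n = −δ(n,n₀) for all n ≥ m, where δ(n,n₀) = 1 if n = n₀ and 0 otherwise. -/
open Finset

/-!
The sequence `F_n` has generating function `(1 - X)^{-θ} e^{ρX} = G`, and `(1 - X) G' =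
(ρ (1 - X) + θ) G` says, coefficient by coefficient, that `F` solves the forward equations of the
queue with infinitely many servers, which are those of the M/M/m queue below state `m`. From state
`m` on the death rate is constant, `A` and `B` are the roots of `m x² - (m + ρ + θ) x + ρ`, and
the combinations of `Aⁿ` and `Bⁿ` solve the equations. Two solutions glued at a state `k` where
they agree solve every equation except possibly the one at `k`, whose residual is the jump of the
death flux (rate times value) into `k`. The constant `R` makes the jump at `m` vanish, and
the normalisation by `√Δ = m (B - A)` makes the jump at `n₀` equal to `-1`.
-/

section ForwardEquations

variable {K : Type*} [CommRing K]

/-- Left-hand side of the `n`-th Laplace-transformed forward Kolmogorov equation for a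
birth-death process with birth rate `ρ` and death rate `d n` in state `n`, evaluated at `u`. State
`0` is a separate case since it has neither a death rate nor a predecessor. -/
def forwardResidual (ρ θ : K) (d u : ℕ → K) : ℕ → K
  | 0 => d 1 * u 1 - (ρ + θ) * u 0
  | n + 1 => d (n + 2) * u (n + 2) + ρ * u n - (ρ + θ + d (n + 1)) * u (n + 1)

variable {ρ θ : K}

lemma forwardResidual_eq_add_flux_sub {d d' u u' : ℕ → K} {n : ℕ} (hd : d n = d' n)
    (hu : u n = u' n) (hu_pred : u (n - 1) = u' (n - 1)) :
    forwardResidual ρ θ d u n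
      = forwardResidual ρ θ d' u' n + (d (n + 1) * u (n + 1) - d' (n + 1) * u' (n + 1)) := by
  cases n with
  | zero => simp only [forwardResidual, hu]; ring
  | succ n =>
    rw [Nat.add_sub_cancel] at hu_pred
    simp only [forwardResidual, hd, hu, hu_pred]
    ring

lemma forwardResidual_congr {d d' u u' : ℕ → K} {n : ℕ} (hd : d n = d' n)
    (hd_succ : d (n + 1) = d' (n + 1)) (hu : u n = u' n) (hu_pred : u (n - 1) = u' (n - 1))
    (hu_succ : u (n + 1) = u' (n + 1)) :
    forwardResidual ρ θ d u n = forwardResidual ρ θ d' u' n := by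
  rw [forwardResidual_eq_add_flux_sub hd hu hu_pred, hd_succ, hu_succ, sub_self, add_zero]

lemma forwardResidual_const_mul (d u : ℕ → K) (a : K) (n : ℕ) :
    forwardResidual ρ θ d (fun k => a * u k) n = a * forwardResidual ρ θ d u n := by
  cases n <;> simp only [forwardResidual] <;> ring

lemma forwardResidual_piecewise_Iic {d d₁ d₂ u v : ℕ → K} {k : ℕ} (hd₁ : ∀ i ≤ k, d i = d₁ i)
    (hd₂ : ∀ i > k, d i = d₂ i) (huv : u k = v k) (n : ℕ) :
    forwardResidual ρ θ d ((Set.Iic k).piecewise u v) n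
      = if n < k then forwardResidual ρ θ d₁ u n
        else if n = k then
          forwardResidual ρ θ d₁ u k + (d₂ (k + 1) * v (k + 1) - d₁ (k + 1) * u (k + 1))
        else forwardResidual ρ θ d₂ v n := by
  have left : ∀ i ≤ k, (Set.Iic k).piecewise u v i = u i :=
    fun i hi => Set.piecewise_eq_of_mem _ _ _ hi
  have right : ∀ i ≥ k, (Set.Iic k).piecewise u v i = v i := by
    intro i hi
    rcases hi.eq_or_lt with rfl | hi
    · rw [left _ le_rfl, huv]
    · exact Set.piecewise_eq_of_notMem _ _ _ (Set.notMem_Iic.mpr hi)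
  rcases lt_trichotomy n k with h | rfl | h
  · rw [if_pos h]
    exact forwardResidual_congr (hd₁ n h.le) (hd₁ _ h) (left n h.le) (left _ (by omega))
      (left _ h)
  · rw [if_neg (lt_irrefl n), if_pos rfl, ← hd₂ _ n.lt_succ_self, ← right _ n.le_succ]
    exact forwardResidual_eq_add_flux_sub (hd₁ n le_rfl) (left n le_rfl) (left _ (n.sub_le 1))
  · rw [if_neg h.not_gt, if_neg h.ne']
    exact forwardResidual_congr (hd₂ n h) (hd₂ _ (by omega)) (right n h.le) (right _ (by omega))
      (right _ (by omega))

lemma forwardResidual_glued_of_flux_jump {m n₀ : ℕ} (hm : 1 ≤ m) (hn₀ : m ≤ n₀) {u v w : ℕ → K}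
    (hu : ∀ n ≤ m, forwardResidual ρ θ (fun k => (k : K)) u n = 0)
    (hv : ∀ n ≥ 1, forwardResidual ρ θ (fun _ => (m : K)) v n = 0)
    (hw : ∀ n ≥ 1, forwardResidual ρ θ (fun _ => (m : K)) w n = 0)
    (huv : u m = v m) (huv_flux : m * v (m + 1) = (m + 1) * u (m + 1))
    (hvw : v n₀ = w n₀) (hvw_flux : m * w (n₀ + 1) = m * v (n₀ + 1) - 1) (n : ℕ) :
    forwardResidual ρ θ (fun k => ((min k m : ℕ) : K))
        ((Set.Iic m).piecewise u ((Set.Iic n₀).piecewise v w)) n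
      = -(if n = n₀ then 1 else 0) := by
  have glued_value : u m = (Set.Iic n₀).piecewise v w m := by
    rw [Set.piecewise_eq_of_mem _ _ _ (Set.mem_Iic.mpr hn₀), huv]
  have glued_flux : m * (Set.Iic n₀).piecewise v w (m + 1)
      = m * v (m + 1) - if m = n₀ then 1 else 0 := by
    rcases hn₀.eq_or_lt with rfl | h
    · rw [if_pos rfl, Set.piecewise_eq_of_notMem _ _ _ (by simp), hvw_flux]
    · rw [if_neg h.ne, Set.piecewise_eq_of_mem _ _ _ (Set.mem_Iic.mpr h), sub_zero]
  rw [forwardResidual_piecewise_Iic (d₁ := fun k => (k : K)) (d₂ := fun _ => (m : K))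
    (fun i hi => by rw [min_eq_left hi]) (fun i hi => by rw [min_eq_right hi.le]) glued_value]
  rcases lt_trichotomy n m with h | rfl | h
  · rw [if_pos h, hu n h.le, if_neg (by omega), neg_zero]
  · rw [if_neg (lt_irrefl n), if_pos rfl, hu n le_rfl, glued_flux, huv_flux]
    push_cast
    ring
  · rw [if_neg h.not_gt, if_neg h.ne', forwardResidual_piecewise_Iic
      (fun _ _ => rfl) (fun _ _ => rfl) hvw, hv n (by omega), hv n₀ (by omega), hw n (by omega),
      hvw_flux]
    split_ifs <;> first | omega | ring

lemma forward_equations_of_forwardResidual {m n₀ : ℕ} (hm : 1 ≤ m) (hn₀ : m ≤ n₀) {P : ℕ → K}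
    (hP : ∀ n, forwardResidual ρ θ (fun k => ((min k m : ℕ) : K)) P n
      = -(if n = n₀ then 1 else 0)) :
    P 1 = (ρ + θ) * P 0
    ∧ (∀ n : ℕ, 1 ≤ n → n < m →
        ((n : K) + 1) * P (n + 1) + ρ * P (n - 1) - (ρ + θ + n) * P n = 0)
    ∧ ∀ n : ℕ, m ≤ n →
        (m : K) * P (n + 1) + ρ * P (n - 1) - (ρ + θ + m) * P n
          = -(if n = n₀ then (1 : K) else 0) := by
  refine ⟨?_, ?_, ?_⟩
  · have h := hP 0
    rw [if_neg (by omega)] at h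
    simp only [forwardResidual, min_eq_left hm, Nat.cast_one] at h
    linear_combination h
  · rintro (_ | n) hn hnm
    · omega
    have h := hP (n + 1)
    rw [if_neg (by omega)] at h
    simp only [forwardResidual, min_eq_left hnm.le, min_eq_left (show n + 2 ≤ m from hnm)] at h
    rw [Nat.add_sub_cancel]
    push_cast at h ⊢
    linear_combination h
  · rintro (_ | n) hmn
    · omega
    have h := hP (n + 1)
    simp only [forwardResidual, min_eq_right hmn, min_eq_right (hmn.trans (Nat.le_succ _))] at h
    exact h

end ForwardEquations

section CharlierSum

open PowerSeries

lemma derivative_rescale {R : Type*} [CommRing R] (a : R) (f : R⟦X⟧) :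
    d⁄dX R (rescale a f) = C a * rescale a (d⁄dX R f) := by
  ext n
  simp only [coeff_derivative, coeff_rescale, coeff_C_mul]
  ring

variable {K : Type*} [Field K]

/-- The sum `F_n(θ)` over an arbitrary field, for instance for a complex Laplace variable `θ`;
over `ℝ` it is `erlF`. In terms of Charlier polynomials it is `ρⁿ C_n(-θ; ρ) / n!`. -/
noncomputable def charlierSum (ρ θ : K) (n : ℕ) : K :=
  ∑ ℓ ∈ Finset.range (n + 1),
    ρ ^ (n - ℓ) / ((n - ℓ).factorial * ℓ.factorial) * (ascPochhammer K ℓ).eval θ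

/-- The binomial series `(1 - X)^{-θ}`. -/
noncomputable def risingFactorialSeries (θ : K) : K⟦X⟧ :=
  PowerSeries.mk fun ℓ => (ascPochhammer K ℓ).eval θ / ℓ.factorial

variable [CharZero K]

lemma coeff_risingFactorialSeries_mul_rescale_exp (ρ θ : K) (n : ℕ) :
    coeff n (risingFactorialSeries θ * rescale ρ (exp K)) = charlierSum ρ θ n := by
  rw [coeff_mul, Finset.Nat.sum_antidiagonal_eq_sum_range_succ_mk]
  refine Finset.sum_congr rfl fun ℓ _ => ?_
  simp only [risingFactorialSeries, coeff_mk, coeff_rescale, coeff_exp, map_div₀, map_one,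
    map_natCast]
  ring

lemma one_sub_X_mul_derivative_risingFactorialSeries (θ : K) :
    (1 - X) * d⁄dX K (risingFactorialSeries θ) = C θ * risingFactorialSeries θ := by
  have coeff_deriv (n : ℕ) : coeff n (d⁄dX K (risingFactorialSeries θ))
      = (θ + n) * coeff n (risingFactorialSeries θ) := by
    simp only [coeff_derivative, risingFactorialSeries, coeff_mk, Nat.factorial_succ,
      ascPochhammer_succ_eval]
    have : (n : K) + 1 ≠ 0 := n.cast_add_one_ne_zero
    push_cast
    field_simp
  ext n
  rw [sub_mul, one_mul, map_sub, coeff_C_mul, coeff_deriv]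
  cases n with
  | zero => simp
  | succ n =>
    rw [coeff_succ_X_mul, coeff_derivative]
    push_cast
    ring

lemma forwardResidual_charlierSum_eq_zero (ρ θ : K) (n : ℕ) :
    forwardResidual ρ θ (fun k => (k : K)) (charlierSum ρ θ) n = 0 := by
  have ode : (1 - X) * d⁄dX K (risingFactorialSeries θ * rescale ρ (exp K))
      = (C ρ * (1 - X) + C θ) * (risingFactorialSeries θ * rescale ρ (exp K)) := by
    rw [Derivation.leibniz, derivative_rescale, derivative_exp, smul_eq_mul, smul_eq_mul]
    linear_combination rescale ρ (exp K) * one_sub_X_mul_derivative_risingFactorialSeries θ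
  have coeff_ode := congrArg (coeff n) ode
  simp only [sub_mul, mul_sub, add_mul, one_mul, mul_one, mul_assoc, map_sub, map_add,
    coeff_C_mul] at coeff_ode
  cases n
  all_goals
    simp only [coeff_zero_X_mul, coeff_succ_X_mul, coeff_derivative,
      coeff_risingFactorialSeries_mul_rescale_exp] at coeff_ode
    simp only [forwardResidual]
    push_cast at coeff_ode ⊢
    linear_combination coeff_ode

end CharlierSum

section GeometricSolutions

variable {K : Type*} [Field K]

lemma forwardResidual_zpow_eq_zero {ρ θ c x : K} (hx : x ≠ 0)
    (hroot : c * x ^ 2 + ρ = (c + ρ + θ) * x) (i : ℤ) {n : ℕ} (hn : 1 ≤ n) :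
    forwardResidual ρ θ (fun _ => c) (fun k => x ^ ((k : ℤ) - i)) n = 0 := by
  obtain ⟨n, rfl⟩ := Nat.exists_eq_add_of_le' hn
  have h_succ : x ^ (((n + 1 : ℕ) : ℤ) - i) = x ^ ((n : ℤ) - i) * x := by
    rw [← zpow_add_one₀ hx]; congr 1; push_cast; ring
  have h_succ_succ : x ^ (((n + 2 : ℕ) : ℤ) - i) = x ^ ((n : ℤ) - i) * x ^ 2 := by
    rw [← zpow_natCast x 2, ← zpow_add₀ hx]; congr 1; push_cast; ring
  simp only [forwardResidual, h_succ, h_succ_succ]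
  linear_combination x ^ ((n : ℤ) - i) * hroot

lemma forwardResidual_eq_zero_of_eq_zpow_add_zpow {ρ θ c x y a s : K} {i j : ℤ} {u : ℕ → K}
    (hx : x ≠ 0) (hy : y ≠ 0) (hx_root : c * x ^ 2 + ρ = (c + ρ + θ) * x)
    (hy_root : c * y ^ 2 + ρ = (c + ρ + θ) * y)
    (hu : ∀ k : ℕ, u k = (x ^ ((k : ℤ) - i) + y ^ ((k : ℤ) - j) * a) / s) {n : ℕ} (hn : 1 ≤ n) :
    forwardResidual ρ θ (fun _ => c) u n = 0 := by
  have hx_zero := forwardResidual_zpow_eq_zero hx hx_root i hn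
  have hy_zero := forwardResidual_zpow_eq_zero hy hy_root j hn
  obtain ⟨n, rfl⟩ := Nat.exists_eq_add_of_le' hn
  simp only [forwardResidual, hu] at hx_zero hy_zero ⊢
  linear_combination (hx_zero + a * hy_zero) / s

lemma vieta_of_sq_eq_discrim {b c p s A B : K} (h2 : (2 : K) ≠ 0) (hc : c ≠ 0)
    (hs : s ^ 2 = b ^ 2 - 4 * c * p) (hA : A = (b - s) / (2 * c)) (hB : B = (b + s) / (2 * c)) :
    c * (A + B) = b ∧ c * (A * B) = p ∧ c * (B - A) = s := by
  subst hA hB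
  refine ⟨by field_simp; ring, ?_, by field_simp; ring⟩
  field_simp
  linear_combination -hs

lemma ne_zero_and_quadratic_eq_of_vieta {b c p x y : K} (hp : p ≠ 0) (hsum : c * (x + y) = b)
    (hprod : c * (x * y) = p) : x ≠ 0 ∧ c * x ^ 2 + p = b * x := by
  refine ⟨?_, by linear_combination x * hsum - hprod⟩
  rintro rfl
  exact hp (by rw [← hprod, zero_mul, mul_zero])

-- `R` is the constant for which `B ^ k + R * A ^ k`, at `k = 0, 1`, is proportional to `Y, X / c`.
lemma one_add_reflection_div {c s A B X Y R : K} (hs : s ≠ 0) (hgap : c * (B - A) = s)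
    (hden : X - A * c * Y ≠ 0) (hR : R = (X - B * c * Y) / (A * c * Y - X)) :
    (1 + R) / s = Y / (X - A * c * Y) := by
  have hden' : A * c * Y - X ≠ 0 := by rwa [← neg_sub, neg_ne_zero]
  rw [hR, one_add_div hden', div_div, div_eq_div_iff (mul_ne_zero hden' hs) hden]
  linear_combination -Y * (X - A * c * Y) * hgap

lemma mul_root_add_reflection_div {c s A B X Y R : K} (hs : s ≠ 0) (hgap : c * (B - A) = s)
    (hden : X - A * c * Y ≠ 0) (hR : R = (X - B * c * Y) / (A * c * Y - X)) :
    c * ((B + A * R) / s) = X / (X - A * c * Y) := by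
  have hden' : A * c * Y - X ≠ 0 := by rwa [← neg_sub, neg_ne_zero]
  rw [hR, ← mul_div_assoc A, add_div' _ _ _ hden', div_div, ← mul_div_assoc,
    div_eq_div_iff (mul_ne_zero hden' hs) hden]
  linear_combination -X * (X - A * c * Y) * hgap

end GeometricSolutions

lemma sq_add_add_sub_four_mul_pos {c ρ θ : ℝ} (hc : 0 < c) (hρ : 0 < ρ) (hθ : 0 < θ) :
    0 < (c + ρ + θ) ^ 2 - 4 * c * ρ := by
  calc 0 < (c - ρ) ^ 2 + θ * (2 * (c + ρ) + θ) := by positivity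
    _ = _ := by ring

theorem mmm_queue_transform_solves_system_general {K : Type*} [Field K] [CharZero K] (ρ θ : K)
    (hρ : ρ ≠ 0) (m n₀ : ℕ) (hm : 1 ≤ m) (hn₀ : m ≤ n₀) (s A B R : K) (hs : s ≠ 0)
    (hs_sq : s ^ 2 = ((m : K) + ρ + θ) ^ 2 - 4 * m * ρ)
    (hA : A = ((m : K) + ρ + θ - s) / (2 * m))
    (hB : B = ((m : K) + ρ + θ + s) / (2 * m))
    (hden : ((m : K) + 1) * charlierSum ρ θ (m + 1) - A * m * charlierSum ρ θ m ≠ 0)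
    (hR : R = (((m : K) + 1) * charlierSum ρ θ (m + 1) - B * m * charlierSum ρ θ m)
      / (A * m * charlierSum ρ θ m - ((m : K) + 1) * charlierSum ρ θ (m + 1)))
    (f1 f2 f3 P : ℕ → K)
    (hf1 : ∀ n : ℕ, f1 n = B ^ ((m : ℤ) - (n₀ : ℤ)) * charlierSum ρ θ n
      / (((m : K) + 1) * charlierSum ρ θ (m + 1) - A * m * charlierSum ρ θ m))
    (hf2 : ∀ n : ℕ, f2 n = (B ^ ((n : ℤ) - (n₀ : ℤ))
      + A ^ ((n : ℤ) - (m : ℤ)) * B ^ ((m : ℤ) - (n₀ : ℤ)) * R) / s)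
    (hf3 : ∀ n : ℕ, f3 n = (A ^ ((n : ℤ) - (n₀ : ℤ))
      + B ^ ((m : ℤ) - (n₀ : ℤ)) * A ^ ((n : ℤ) - (m : ℤ)) * R) / s)
    (hP : ∀ n : ℕ, P n = if n ≤ m then f1 n else if n ≤ n₀ then f2 n else f3 n) :
    f1 m = f2 m
    ∧ f2 n₀ = f3 n₀
    ∧ P 1 = (ρ + θ) * P 0
    ∧ (∀ n : ℕ, 1 ≤ n → n < m →
        ((n : K) + 1) * P (n + 1) + ρ * P (n - 1) - (ρ + θ + n) * P n = 0)
    ∧ ∀ n : ℕ, m ≤ n →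
        (m : K) * P (n + 1) + ρ * P (n - 1) - (ρ + θ + m) * P n
          = -(if n = n₀ then (1 : K) else 0) := by
  have hm_ne : (m : K) ≠ 0 := Nat.cast_ne_zero.mpr (by omega)
  obtain ⟨hsum, hprod, hgap⟩ := vieta_of_sq_eq_discrim two_ne_zero hm_ne hs_sq hA hB
  obtain ⟨hA_ne, hA_root⟩ := ne_zero_and_quadratic_eq_of_vieta hρ hsum hprod
  obtain ⟨hB_ne, hB_root⟩ := ne_zero_and_quadratic_eq_of_vieta hρ
    ((add_comm B A).symm ▸ hsum) ((mul_comm B A).symm ▸ hprod)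
  have balance_f1 (n : ℕ) : forwardResidual ρ θ (fun k => (k : K)) f1 n = 0 := by
    simp only [funext hf1, mul_div_right_comm _ (charlierSum ρ θ _)]
    rw [forwardResidual_const_mul, forwardResidual_charlierSum_eq_zero, mul_zero]
  have balance_f2 (n : ℕ) (hn : n ≥ 1) : forwardResidual ρ θ (fun _ => (m : K)) f2 n = 0 :=
    forwardResidual_eq_zero_of_eq_zpow_add_zpow hB_ne hA_ne hB_root hA_root
      (fun k => by rw [hf2, mul_assoc]) hn
  have balance_f3 (n : ℕ) (hn : n ≥ 1) : forwardResidual ρ θ (fun _ => (m : K)) f3 n = 0 :=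
    forwardResidual_eq_zero_of_eq_zpow_add_zpow hA_ne hA_ne hA_root hA_root
      (fun k => by rw [hf3, mul_comm (B ^ _), mul_assoc]) hn
  have value_m : f1 m = f2 m := by
    rw [hf1, hf2, sub_self, zpow_zero]
    linear_combination -B ^ ((m : ℤ) - n₀) * one_add_reflection_div hs hgap hden hR
  have flux_m : m * f2 (m + 1) = (m + 1) * f1 (m + 1) := by
    rw [hf1, hf2, Nat.cast_succ, add_sub_right_comm, zpow_add_one₀ hB_ne, add_sub_cancel_left,
      zpow_one]
    linear_combination B ^ ((m : ℤ) - n₀) * mul_root_add_reflection_div hs hgap hden hR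
  have value_n₀ : f2 n₀ = f3 n₀ := by
    rw [hf2, hf3, sub_self, zpow_zero, zpow_zero]
    ring
  have flux_n₀ : m * f3 (n₀ + 1) = m * f2 (n₀ + 1) - 1 := by
    rw [hf2, hf3, Nat.cast_succ, add_sub_cancel_left, zpow_one, zpow_one]
    field_simp
    linear_combination -hgap
  have glued : P = (Set.Iic m).piecewise f1 ((Set.Iic n₀).piecewise f2 f3) := by
    funext n
    simp only [hP, Set.piecewise, Set.mem_Iic]
  refine ⟨value_m, value_n₀, forward_equations_of_forwardResidual hm hn₀ ?_⟩
  rw [glued]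
  exact forwardResidual_glued_of_flux_jump hm hn₀ (fun n _ => balance_f1 n) balance_f2 balance_f3
    value_m flux_m value_n₀ flux_n₀

/-- the explicit family P̂_n solves the Laplace-transformed forward
Kolmogorov system of the M/M/m queue started in state n₀ ≥ m; moreover Δ > 0 and the
three defining formulas agree at n = m and at n = n₀. -/
theorem mmm_queue_transform_solves_system (ρ θ : ℝ) (hρ : 0 < ρ) (hθ : 0 < θ)
    (m n₀ : ℕ) (hm : 1 ≤ m) (hn₀ : m ≤ n₀)
    (Δ A B R : ℝ)
    (hΔ : Δ = ((m : ℝ) + ρ + θ) ^ 2 - 4 * m * ρ)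
    (hA : A = ((m : ℝ) + ρ + θ - Real.sqrt Δ) / (2 * m))
    (hB : B = ((m : ℝ) + ρ + θ + Real.sqrt Δ) / (2 * m))
    (hden : ((m : ℝ) + 1) * erlF ρ θ (m + 1) - A * m * erlF ρ θ m ≠ 0)
    (hR : R = (((m : ℝ) + 1) * erlF ρ θ (m + 1) - B * m * erlF ρ θ m)
      / (A * m * erlF ρ θ m - ((m : ℝ) + 1) * erlF ρ θ (m + 1)))
    (f1 f2 f3 P : ℕ → ℝ)
    (hf1 : ∀ n : ℕ, f1 n = B ^ ((m : ℤ) - (n₀ : ℤ)) * erlF ρ θ n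
      / (((m : ℝ) + 1) * erlF ρ θ (m + 1) - A * m * erlF ρ θ m))
    (hf2 : ∀ n : ℕ, f2 n = (B ^ ((n : ℤ) - (n₀ : ℤ))
      + A ^ ((n : ℤ) - (m : ℤ)) * B ^ ((m : ℤ) - (n₀ : ℤ)) * R) / Real.sqrt Δ)
    (hf3 : ∀ n : ℕ, f3 n = (A ^ ((n : ℤ) - (n₀ : ℤ))
      + B ^ ((m : ℤ) - (n₀ : ℤ)) * A ^ ((n : ℤ) - (m : ℤ)) * R) / Real.sqrt Δ)
    (hP : ∀ n : ℕ, P n = if n ≤ m then f1 n else if n ≤ n₀ then f2 n else f3 n) :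
    0 < Δ
    ∧ f1 m = f2 m
    ∧ f2 n₀ = f3 n₀
    ∧ P 1 = (ρ + θ) * P 0
    ∧ (∀ n : ℕ, 1 ≤ n → n < m →
        ((n : ℝ) + 1) * P (n + 1) + ρ * P (n - 1) - (ρ + θ + n) * P n = 0)
    ∧ ∀ n : ℕ, m ≤ n →
        (m : ℝ) * P (n + 1) + ρ * P (n - 1) - (ρ + θ + m) * P n
          = -(if n = n₀ then (1 : ℝ) else 0) := by
  have hΔ_pos : 0 < Δ := hΔ ▸ sq_add_add_sub_four_mul_pos (by exact_mod_cast hm) hρ hθ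
  exact ⟨hΔ_pos, mmm_queue_transform_solves_system_general ρ θ hρ.ne' m n₀ hm hn₀ √Δ A B R
    (Real.sqrt_pos.mpr hΔ_pos).ne' ((Real.sq_sqrt hΔ_pos.le).trans hΔ) hA hB hden hR f1 f2 f3 P
    hf1 hf2 hf3 hP⟩
end
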